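/- arXiv:2204.12040 — 6 statements merged into one kernel-verified Lean document; each statement's English description precedes it below -/
import Mathlib

section
/- Let A be a commutative ring, and let f : Q → S and g : R → S be surjective maps of types. Then the induced map of free A-modules A(Q ×_S R) → A(Q) ×_{A(S)} A(R) is surjective: for every x : Q →₀ A and y : R →₀ A with Finsupp.mapDomain f x = Finsupp.mapDomain g y, there exists z : (Q ×_S R) →₀ A such that Finsupp.mapDomain (fun p => p.1.1) z = x and Finsupp.mapDomain (fun p => p.1.2) z = y. -/
/-!
Choose sections `s : S → Q` of `f` and `t : S → R` of `g`. They give maps into the fiber product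
`i q = (q, t (f q))`, `j r = (s (g r), r)` and `k σ = (s σ, t σ)`. The element
`z = i_* x + j_* y - k_* (f_* x)` lifts `(x, y)`: its first projection is
`x + s_* g_* y - s_* f_* x = x` and its second is `t_* f_* x + y - t_* f_* x = y`,
where `f_* x = g_* y` is used only for the first.
-/

theorem mapDomain_sub_aux {A : Type*} [CommRing A] {α β : Type*} (h : α → β) (u v : α →₀ A) :
    Finsupp.mapDomain h (u - v) = Finsupp.mapDomain h u - Finsupp.mapDomain h v :=
  map_sub (Finsupp.mapDomain.addMonoidHom h) u v

/-- For a surjective `f : Q → S` and `g : R → S`, the induced map of free `A`-modules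
`A(Q ×_S R) → A(Q) ×_{A(S)} A(R)` is surjective. -/
theorem free_module_fiber_product_surjective
    {A : Type*} [CommRing A] {Q R S : Type*} (f : Q → S) (g : R → S)
    (hf : Function.Surjective f) (hg : Function.Surjective g)
    (x : Q →₀ A) (y : R →₀ A)
    (hxy : Finsupp.mapDomain f x = Finsupp.mapDomain g y) :
    ∃ z : {p : Q × R // f p.1 = g p.2} →₀ A,
      Finsupp.mapDomain (fun p => p.1.1) z = x ∧
      Finsupp.mapDomain (fun p => p.1.2) z = y := by
  obtain ⟨s, hs⟩ := hf.hasRightInverse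
  obtain ⟨t, ht⟩ := hg.hasRightInverse
  let i : Q → {p : Q × R // f p.1 = g p.2} := fun q => ⟨(q, t (f q)), (ht (f q)).symm⟩
  let j : R → {p : Q × R // f p.1 = g p.2} := fun r => ⟨(s (g r), r), hs (g r)⟩
  let k : S → {p : Q × R // f p.1 = g p.2} := fun σ => ⟨(s σ, t σ), (hs σ).trans (ht σ).symm⟩
  refine ⟨Finsupp.mapDomain i x + Finsupp.mapDomain j y
    - Finsupp.mapDomain k (Finsupp.mapDomain f x), ?_, ?_⟩
  · rw [mapDomain_sub_aux, Finsupp.mapDomain_add, hxy]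
    simp only [← Finsupp.mapDomain_comp]
    change Finsupp.mapDomain id x + Finsupp.mapDomain (s ∘ g) y
      - Finsupp.mapDomain (s ∘ g) y = x
    rw [add_sub_cancel_right, Finsupp.mapDomain_id]
  · rw [mapDomain_sub_aux, Finsupp.mapDomain_add]
    simp only [← Finsupp.mapDomain_comp]
    change Finsupp.mapDomain (t ∘ f) x + Finsupp.mapDomain id y
      - Finsupp.mapDomain (t ∘ f) x = y
    rw [add_sub_cancel_left, Finsupp.mapDomain_id]
end

section
/- Let f : Q → S and g : R → S be surjective maps of types. Then the induced map of free commutative monoids (Q ×_S R)^ℕ → Q^ℕ ×_{S^ℕ} R^ℕ is surjective: for all multisets m : Multiset Q and n : Multiset R with Multiset.map f m = Multiset.map g n, there exists l : Multiset (Q ×_S R) such that Multiset.map (fun p => p.1.1) l = m and Multiset.map (fun p => p.1.2) l = n. -/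
/-- For surjections `f : Q → S` and `g : R → S`, the induced map of free commutative
monoids `(Q ×_S R)^ℕ → Q^ℕ ×_{S^ℕ} R^ℕ` is surjective. -/
theorem free_comm_monoid_fiber_product_surjective
    {Q R S : Type*} (f : Q → S) (g : R → S)
    (hf : Function.Surjective f) (hg : Function.Surjective g)
    (m : Multiset Q) (n : Multiset R)
    (hmn : Multiset.map f m = Multiset.map g n) :
    ∃ l : Multiset {p : Q × R // f p.1 = g p.2},
      Multiset.map (fun p => p.1.1) l = m ∧
      Multiset.map (fun p => p.1.2) l = n := by
  -- An equality of images is a pairing of `m` with `n` whose pairs lie in the fiber product.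
  rw [← Multiset.rel_eq, Multiset.rel_map] at hmn
  induction hmn with
  | zero => exact ⟨0, rfl, rfl⟩
  | cons hab _ ih =>
    obtain ⟨l, rfl, rfl⟩ := ih
    exact ⟨⟨(_, _), hab⟩ ::ₘ l, Multiset.map_cons _ _ _, Multiset.map_cons _ _ _⟩
end

section
/- Let A be a commutative ring, and let f : Q → S and g : R → S be surjective maps of types. Then the induced ring homomorphism A[Q ×_S R] → A[Q] ×_{A[S]} A[R] is surjective: for all p : MvPolynomial Q A and q : MvPolynomial R A with MvPolynomial.rename f p = MvPolynomial.rename g q, there exists u : MvPolynomial (Q ×_S R) A such that MvPolynomial.rename (fun x => x.1.1) u = p and MvPolynomial.rename (fun x => x.1.2) u = q. -/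
/-!
Write `P = Q ×_S R`, with projections `π₁ : A[P] → A[Q]` and `π₂ : A[P] → A[R]`, both surjective.
Lift `p` along `π₁` to some `v`; it remains to correct `v` by an element of `ker π₁` mapping under
`π₂` to `q - π₂ v`, which lies in the kernel of `A[R] → A[S]`. So it suffices that `ker π₁`
surjects onto this kernel. The image `J` of `ker π₁` is an ideal because `π₂` is surjective, and it
contains `X r - X r'` whenever `g r = g r'`, as the image of `X (a, r) - X (a, r')` for any `a` with
`f a = g r`; the kernel of `A[R] → A[S]` is generated by these differences
(`mem_of_rename_eq_zero`).
-/

/-- The kernel of `rename g` is contained in every ideal containing the differences `X r - X r'`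
with `g r = g r'`: modulo such an ideal, every polynomial agrees with its image under renaming along
`s ∘ g`, where `s` is a section of `g`. -/
lemma mem_of_rename_eq_zero {A : Type*} [CommRing A] {R S : Type*} (g : R → S)
    (hg : Function.Surjective g) (J : Ideal (MvPolynomial R A))
    (hJ : ∀ r r', g r = g r' → (MvPolynomial.X r - MvPolynomial.X r' : MvPolynomial R A) ∈ J)
    (q : MvPolynomial R A) (hq : MvPolynomial.rename g q = 0) : q ∈ J := by
  obtain ⟨s, hs⟩ := hg.hasRightInverse
  have key : Ideal.Quotient.mkₐ A J =
      ((Ideal.Quotient.mkₐ A J).comp (MvPolynomial.rename s)).comp (MvPolynomial.rename g) := by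
    ext r
    simp only [AlgHom.comp_apply, MvPolynomial.rename_X, Ideal.Quotient.mkₐ_eq_mk]
    exact Ideal.Quotient.eq.2 (hJ _ _ (hs (g r)).symm)
  have h := DFunLike.congr_fun key q
  simp only [AlgHom.comp_apply, hq, map_zero, Ideal.Quotient.mkₐ_eq_mk] at h
  exact Ideal.Quotient.eq_zero_iff_mem.1 h

/-- For surjections `f : Q → S` and `g : R → S`, the induced ring homomorphism
`A[Q ×_S R] → A[Q] ×_{A[S]} A[R]` is surjective. -/
theorem free_algebra_fiber_product_surjective
    {A : Type*} [CommRing A] {Q R S : Type*} (f : Q → S) (g : R → S)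
    (hf : Function.Surjective f) (hg : Function.Surjective g)
    (p : MvPolynomial Q A) (q : MvPolynomial R A)
    (hpq : MvPolynomial.rename f p = MvPolynomial.rename g q) :
    ∃ u : MvPolynomial {x : Q × R // f x.1 = g x.2} A,
      MvPolynomial.rename (fun x => x.1.1) u = p ∧
      MvPolynomial.rename (fun x => x.1.2) u = q := by
  let fst : {x : Q × R // f x.1 = g x.2} → Q := fun x => x.1.1
  let snd : {x : Q × R // f x.1 = g x.2} → R := fun x => x.1.2
  have hfst : Function.Surjective fst := fun a =>
    let ⟨r, hr⟩ := hg (f a)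
    ⟨⟨(a, r), hr.symm⟩, rfl⟩
  have hsnd : Function.Surjective snd := fun r =>
    let ⟨a, ha⟩ := hf (g r)
    ⟨⟨(a, r), ha⟩, rfl⟩
  have hcomp : f ∘ fst = g ∘ snd := funext fun x => x.2
  obtain ⟨v, hv⟩ := MvPolynomial.rename_surjective (R := A) fst hfst p
  let π₁ : MvPolynomial _ A →ₐ[A] MvPolynomial Q A := MvPolynomial.rename fst
  let π₂ : MvPolynomial _ A →ₐ[A] MvPolynomial R A := MvPolynomial.rename snd
  have hmem : q - π₂ v ∈ (RingHom.ker π₁).map π₂ := by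
    refine mem_of_rename_eq_zero g hg _ (fun r r' h => ?_) _ ?_
    · obtain ⟨a, ha⟩ := hf (g r)
      have hker : (MvPolynomial.X ⟨(a, r), ha⟩ - MvPolynomial.X ⟨(a, r'), ha.trans h⟩ :
          MvPolynomial {x : Q × R // f x.1 = g x.2} A) ∈ RingHom.ker π₁ := by
        simp [RingHom.mem_ker, π₁, fst]
      simpa [π₂, snd] using Ideal.mem_map_of_mem π₂ hker
    · rw [map_sub, ← hpq, ← hv, MvPolynomial.rename_rename, MvPolynomial.rename_rename, hcomp,
        sub_self]
  obtain ⟨w, hw, hwq⟩ := (Ideal.mem_map_iff_of_surjective π₂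
    (MvPolynomial.rename_surjective snd hsnd)).1 hmem
  refine ⟨v + w, ?_, ?_⟩
  · change π₁ (v + w) = p
    rw [map_add, (RingHom.mem_ker).1 hw, add_zero]
    exact hv
  · change π₂ (v + w) = q
    rw [map_add, hwq, add_sub_cancel]
end

section
/- Let A be a commutative ring, ι a nonempty finite type, S a type, Q : ι → Type a family of types, and f : ∀ i, Q i → S a family of surjective maps. Let T := {q : ∀ i, Q i // ∀ i j, f i (q i) = f j (q j)} be the iterated fiber product of the Q i over S. Then the induced map A[T] → A[Q i₀] ×_{A[S]} ⋯ ×_{A[S]} A[Q iₙ] is surjective: for every family p : ∀ i, MvPolynomial (Q i) A such that MvPolynomial.rename (f i) (p i) = MvPolynomial.rename (f j) (p j) for all i, j, there exists u : MvPolynomial T A with MvPolynomial.rename (fun q => q.1 i) u = p i for every i. -/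
/-!
Choose sections `s i` of the surjections `f i` and let `g` be the common image of the `p i` in
`A[S]`. The sections give `σ : S → T`, and `rename σ g` lifts the family `rename (s i) g`, so what
remains is the family of differences `p i - rename (s i) g`, each in the kernel of
`rename (f i)`. The map `t i : Q i → T` with coordinate `q` at `i` and `s j (f i q)` at `j ≠ i`
lifts such a difference: its `i`-th projection is the identity, while its other projections
factor through `f i` and hence kill the kernel. Summing these lifts over `i` gives the preimage.
-/

/-- Iterated form: for a nonempty finite family of surjections `f i : Q i → S`, the map
`A[T] → A[Q i₀] ×_{A[S]} ⋯ ×_{A[S]} A[Q iₙ]` from the free algebra on the iterated fiber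
product `T` is surjective. -/
theorem free_algebra_iterated_fiber_product_surjective
    {A : Type*} [CommRing A] {ι : Type*} [Fintype ι] [Nonempty ι]
    {S : Type*} {Q : ι → Type*} (f : ∀ i, Q i → S)
    (hf : ∀ i, Function.Surjective (f i))
    (p : ∀ i, MvPolynomial (Q i) A)
    (hp : ∀ i j, MvPolynomial.rename (f i) (p i) = MvPolynomial.rename (f j) (p j)) :
    ∃ u : MvPolynomial {q : ∀ i, Q i // ∀ i j, f i (q i) = f j (q j)} A,
      ∀ i, MvPolynomial.rename (fun q => q.1 i) u = p i := by
  classical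
  choose s hs using hf
  obtain ⟨i₀⟩ := ‹Nonempty ι›
  obtain ⟨g, hg⟩ : ∃ g, ∀ i, MvPolynomial.rename (f i) (p i) = g := ⟨_, fun i => hp i i₀⟩
  let σ : S → {q : ∀ i, Q i // ∀ i j, f i (q i) = f j (q j)} :=
    fun x => ⟨fun i => s i x, fun i j => by rw [hs, hs]⟩
  have ht (i : ι) (q : Q i) (j : ι) :
      f j (Function.update (fun j => s j (f i q)) i q j) = f i q := by
    rcases eq_or_ne j i with rfl | h
    · simp
    · simp [h, hs]
  let t (i : ι) : Q i → {q : ∀ i, Q i // ∀ i j, f i (q i) = f j (q j)} :=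
    fun q => ⟨Function.update (fun j => s j (f i q)) i q, fun j k => by rw [ht, ht]⟩
  have hker (i : ι) :
      MvPolynomial.rename (f i) (p i - MvPolynomial.rename (s i) g) = 0 := by
    have h : f i ∘ s i = id := funext (hs i)
    rw [map_sub, MvPolynomial.rename_rename, h, MvPolynomial.rename_id_apply, hg, sub_self]
  refine ⟨MvPolynomial.rename σ g +
    ∑ i, MvPolynomial.rename (t i) (p i - MvPolynomial.rename (s i) g), fun k => ?_⟩
  have hσ : (fun q : {q : ∀ i, Q i // ∀ i j, f i (q i) = f j (q j)} => q.1 k) ∘ σ = s k := rfl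
  have htk : (fun q : {q : ∀ i, Q i // ∀ i j, f i (q i) = f j (q j)} => q.1 k) ∘ t k = id := by
    funext q
    simp [t]
  rw [map_add, map_sum, MvPolynomial.rename_rename, hσ, Finset.sum_eq_single k]
  · rw [MvPolynomial.rename_rename, htk, MvPolynomial.rename_id_apply, add_sub_cancel]
  · intro j _ hj
    have htj : (fun q : {q : ∀ i, Q i // ∀ i j, f i (q i) = f j (q j)} => q.1 k) ∘ t j
        = s k ∘ f j := by
      funext q
      simp [t, hj.symm]
    rw [MvPolynomial.rename_rename, htj, ← MvPolynomial.rename_rename, hker, map_zero]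
  · simp
end

section
/- Let (C, J) be a site, and let U be an object of C whose only covering sieve is the maximal sieve (i.e., every S ∈ J U equals ⊤); such U is called a local object. Let L be the sheafification of the representable presheaf yoneda.obj U in Sheaf J (Type), and suppose F is a retract of L: there exist i : F ⟶ L and r : L ⟶ F with i ≫ r = 𝟙 F. Then F is a local object of the sheaf category: for every family of morphisms p_k : E_k ⟶ F (k in an index type K) that is jointly epimorphic (whenever a, b : F ⟶ G satisfy p_k ≫ a = p_k ≫ b for all k, then a = b), there exists some k and a section s : F ⟶ E_k with s ≫ p_k = 𝟙 F. -/
/-!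
Let `x : F(U)` be the section corresponding to `r : L ⟶ F`. The union of the (presheaf) images of
the `p k` generates a subsheaf of `F` whose inclusion is epimorphic, hence locally surjective, so
`x` lies in that union locally on `U` (`exists_cover_of_jointly_epi`). As `U` has only the trivial
cover, `x = p k e` for a single `k` and some `e : E k (U)`. The map `t : L ⟶ E k` classified by `e`
satisfies `t ≫ p k = r`, so `i ≫ t` is a section of `p k`.
-/

open CategoryTheory

universe u

/-- A jointly epimorphic family of morphisms of sheaves of types is jointly locally surjective. -/
lemma exists_cover_of_jointly_epi
    {C : Type u} [SmallCategory C] (J : GrothendieckTopology C)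
    (F : Sheaf J (Type u)) {K : Type u} (E : K → Sheaf J (Type u)) (p : ∀ k, E k ⟶ F)
    (hp : ∀ {G : Sheaf J (Type u)} (a b : F ⟶ G), (∀ k, p k ≫ a = p k ≫ b) → a = b)
    (U : C) (x : F.obj.obj (Opposite.op U)) :
    ∃ S ∈ J U, ∀ (V : C) (f : V ⟶ U), S f →
      ∃ (k : K) (e : (E k).obj.obj (Opposite.op V)),
        (p k).hom.app (Opposite.op V) e = F.obj.map f.op x := by
  let G : Subfunctor F.obj := ⨆ k, Subfunctor.range (p k).hom
  have hle : ∀ k, Subfunctor.range (p k).hom ≤ G.sheafify J := fun k =>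
    (le_iSup (fun k => Subfunctor.range (p k).hom) k).trans (G.le_sheafify J)
  let I : Sheaf J (Type u) := ⟨(G.sheafify J).toFunctor, by
    rw [isSheaf_iff_isSheaf_of_type]
    apply Subfunctor.sheafify_isSheaf
    rw [← isSheaf_iff_isSheaf_of_type]
    exact F.property⟩
  let ι : I ⟶ F := ⟨(G.sheafify J).ι⟩
  let q : ∀ k, E k ⟶ I := fun k => ⟨Subfunctor.lift (p k).hom (hle k)⟩
  have hq : ∀ k, q k ≫ ι = p k := fun k => by
    ext1
    exact Subfunctor.lift_ι _ (hle k)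
  have : Epi ι := ⟨fun a b h => hp a b fun k => by
    rw [← hq k, Category.assoc, Category.assoc, h]⟩
  have hs : Sheaf.IsLocallySurjective ι := (Sheaf.isLocallySurjective_iff_epi ι).2 inferInstance
  -- Locally `x` lifts to `G.sheafify J`, whose sections are only locally in `G`: two covers compose.
  refine ⟨G.sieveOfSection x, ?_, fun V f hf => ?_⟩
  · refine J.transitive (Presheaf.imageSieve_mem J ι.hom x) _ fun V f hf => ?_
    obtain ⟨y, hy⟩ := hf
    have h1 : G.sieveOfSection y.1 ∈ J V := y.2
    refine J.superset_covering (fun W g hg => ?_) h1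
    have hy' : y.1 = F.obj.map f.op x := hy
    have hg' : F.obj.map g.op y.1 ∈ G.obj (Opposite.op W) := hg
    change F.obj.map (g ≫ f).op x ∈ G.obj (Opposite.op W)
    rw [hy'] at hg'
    simpa using hg'
  · have h : F.obj.map f.op x ∈ G.obj (Opposite.op V) := hf
    simpa [G, Subfunctor.iSup_obj, Subfunctor.range] using h

/-- If `U` is a local object of a site (its only covering sieve is the maximal one) and the
sheaf `F` is a retract of the sheafification `L` of the representable presheaf of `U`, then
`F` is a local object of the sheaf category: every jointly epimorphic family onto `F`
admits a section through one of its members. -/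
theorem retract_of_local_representable_is_local
    {C : Type u} [SmallCategory C] (J : GrothendieckTopology C) (U : C)
    (hU : ∀ S ∈ J U, S = ⊤)
    (F : Sheaf J (Type u))
    (i : F ⟶ (presheafToSheaf J (Type u)).obj (yoneda.obj U))
    (r : (presheafToSheaf J (Type u)).obj (yoneda.obj U) ⟶ F)
    (hir : i ≫ r = 𝟙 F)
    {K : Type u} (E : K → Sheaf J (Type u)) (p : ∀ k, E k ⟶ F)
    (hp : ∀ {G : Sheaf J (Type u)} (a b : F ⟶ G), (∀ k, p k ≫ a = p k ≫ b) → a = b) :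
    ∃ (k : K) (s : F ⟶ E k), s ≫ p k = 𝟙 F := by
  let η := toSheafify J (yoneda.obj U)
  let x : F.obj.obj (Opposite.op U) := yonedaEquiv (η ≫ r.hom)
  obtain ⟨S, hS, h⟩ := exists_cover_of_jointly_epi J F E p hp U x
  obtain ⟨k, e, he⟩ := h U (𝟙 U) (by rw [hU S hS]; trivial)
  let t : (presheafToSheaf J (Type u)).obj (yoneda.obj U) ⟶ E k :=
    ⟨sheafifyLift J (yonedaEquiv.symm e) (E k).property⟩
  have ht : t ≫ p k = r := by
    ext1
    refine sheafify_hom_ext J _ _ F.property ?_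
    change η ≫ sheafifyLift J (yonedaEquiv.symm e) (E k).property ≫ (p k).hom = η ≫ r.hom
    rw [← Category.assoc, toSheafify_sheafifyLift]
    apply yonedaEquiv.injective
    rw [yonedaEquiv_comp, Equiv.apply_symm_apply, he]
    simp [x]
  exact ⟨k, i ≫ t, by rw [Category.assoc, ht, hir]⟩
end

section
/- Let R be a commutative ring, N an R-module, and f : N →ₗ[R] R an R-linear map satisfying f x • y = f y • x for all x, y : N (a crossed ring). Let S be a commutative R-algebra. Then the base-changed S-linear map g : N ⊗[R] S →ₗ[S] S, determined on pure tensors by g (n ⊗ₜ s) = algebraMap R S (f n) * s, again satisfies the crossed-ring identity g u • v = g v • u for all u, v : N ⊗[R] S. Hence N ⊗_R S → S is a crossed ring over S. -/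
open TensorProduct

/-- Base change of a crossed ring: if `f : N →ₗ[R] R` satisfies the crossed-ring identity
`f x • y = f y • x`, and `S` is a commutative `R`-algebra, then the base-changed `S`-linear
map `g : N ⊗[R] S →ₗ[S] S` (written here in Mathlib's `S ⊗[R] N` orientation), determined
on pure tensors by `g (s ⊗ₜ n) = algebraMap R S (f n) * s`, again satisfies the
crossed-ring identity `g u • v = g v • u`. -/
theorem crossed_ring_base_change
    {R N S : Type*} [CommRing R] [AddCommGroup N] [Module R N]
    [CommRing S] [Algebra R S]
    (f : N →ₗ[R] R) (hf : ∀ x y : N, f x • y = f y • x)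
    (g : S ⊗[R] N →ₗ[S] S)
    (hg : ∀ (s : S) (n : N), g (s ⊗ₜ[R] n) = algebraMap R S (f n) * s) :
    ∀ u v : S ⊗[R] N, g u • v = g v • u := by
  intro u v
  -- Both sides are biadditive in `(u, v)`, so pure tensors suffice.
  induction u using TensorProduct.induction_on with
  | zero => simp
  | add a b ha hb => rw [map_add, add_smul, smul_add, ha, hb]
  | tmul s x =>
    induction v using TensorProduct.induction_on with
    | zero => simp
    | add a b ha hb => rw [map_add, add_smul, smul_add, ha, hb]
    | tmul t y =>
      -- Moving `f x` and `f y` across the tensor sign reduces the claim to `hf x y`.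
      have key : ∀ (a b : S) (m n : N),
          (algebraMap R S (f m) * a) • (b ⊗ₜ[R] n) = (a * b) ⊗ₜ[R] (f m • n) := by
        intro a b m n
        rw [smul_tmul', smul_eq_mul, mul_assoc, ← Algebra.smul_def, smul_tmul]
      rw [hg, hg, key, key, hf x y, mul_comm s t]
end
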